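/- Let G be a graph containing no triangle, no induced cycle of length 5, and no induced cycle of even length at least 6, let v be a vertex of G and (N_0, N_1, …) be the v-levelling. Let P be a rooted PCP of order ℓ in a level N_k for some k ≥ 2, with leftovers at least δ, and let A = N(G_ℓ) ∩ N_{k−1} be the active lift of the PCP. Then χ(A) ≥ δ/52. -/

import Mathlib

/-!
The active lift `A` controls the last block `H` of the PCP: in fact `χ(H) ≤ 2 χ(A)`, which is much
stronger than the bound `χ(H) ≤ 52 χ(A)`. Two facts give this.

*The active lift dominates `H`* (`PCP.exists_adj_block`). Let `w ∈ N_{k-1}` have a neighbour in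
`H` and suppose it has none in the last regular block `B`, with entry `x` and exit `y`. There is an
induced path from `y` to `w` through the last path and `H`, and an induced path from `w` to `x`
through the lower levels, the root and the earlier part of the PCP. Apart from their ends, these
paths have no edges to each other or to `B`. Completing them by the odd and by the even induced `xy`-path across `B`
yields two holes of different parities and length at least six, one of which is forbidden. Since
each vertex of `H` has a neighbour in `N_{k-1}`, it has one in `A`.

*A set `X ⊆ N_k` dominated by a stable set `A' ⊆ N_{k-1}` is bipartite* (`bipartite_of_dominated`).
Two vertices `e, a` of `A'` are joined by an induced path through the lower levels, and it closes up
with any induced `ea`-path through `X` to a hole; hence no odd `ea`-path through `X` coexists with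
an even one of length at least four. Take a shortest odd cycle `c` in `X`; it is induced. Among all
vertices of `A'` with two neighbours at odd distance `g` along the cycle (going round the whole
cycle counts) choose `a`, adjacent to `c 0` and `c g`, with `g` least.

* If `g < |c|`, let `e ∈ A'` be adjacent to `c 1`, and let `c t` be its last neighbour among
  `c 1, …, c g`; minimality of `g` makes `t` odd. When `t = g`, the vertices
  `a, c 0, c 1, e, c g` form a closed walk of length five, impossible without triangles and induced
  pentagons. Otherwise `a, c 0, c 1, e` and `e, c t, …, c g, a` are induced paths of length three
  and of even length at least four.
* If `g = |c|`, every vertex of `A'` has at most one neighbour on the cycle, and a vertex `e ∈ A'`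
  adjacent to `c 2` gives the induced paths `a, c 0, c 1, c 2, e` and `e, c 2, …, c g, a` of
  different parities.

Colouring `A` with `χ(A)` colours and splitting `H` according to the colour of a chosen neighbour
in `A` therefore splits `H` into `χ(A)` bipartite pieces.
-/

open SimpleGraph

/-- The chromatic number of `G`, as a natural number. -/
noncomputable def chi {V : Type} (G : SimpleGraph V) : ℕ := G.chromaticNumber.toNat

/-- The chromatic number of the subgraph of `G` induced by the vertex set `A`. -/
noncomputable def chiSet {V : Type} (G : SimpleGraph V) (A : Set V) : ℕ :=
  (G.induce A).chromaticNumber.toNat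

/-- `G` contains no induced cycle of length `n`: there is no graph embedding
(induced-subgraph embedding) of the `n`-cycle into `G`. -/
def NoInducedCycle {V : Type} (G : SimpleGraph V) (n : ℕ) : Prop :=
  IsEmpty (cycleGraph n ↪g G)

/-- The `k`-th level of the `v`-levelling: vertices at distance exactly `k` from `v`. -/
def level {V : Type} (G : SimpleGraph V) (v : V) (k : ℕ) : Set V :=
  {x | G.Reachable v x ∧ G.dist v x = k}

/-- `N(S)`: the set of vertices adjacent to at least one vertex of `S`. -/
def neighborsOf {V : Type} (G : SimpleGraph V) (S : Set V) : Set V :=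
  {x | ∃ s ∈ S, G.Adj s x}

/-- A walk is an induced path: it is a path, and its vertex set induces
no edges other than the path edges. -/
def IsInducedPathW {V : Type} {G : SimpleGraph V} {u w : V} (p : G.Walk u w) : Prop :=
  p.IsPath ∧ ∀ a ∈ p.support, ∀ b ∈ p.support, G.Adj a b → s(a, b) ∈ p.edges

/-- A Parity Changing Path (PCP) of order `ℓ` in `G`: regular blocks `block 0, …, block (ℓ-1)`
(vertex sets of induced subgraphs), a last block `lastBlock`, induced paths `path i` of
length at least `2` from `y i ∈ block i` to `x i.succ`, with the prescribed shared vertices,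
disjointness and edge conditions, an induced odd and an induced even `x i`–`y i` path inside
each regular block, `lastBlock` connected and each regular block `4`-colorable. -/
structure PCP {V : Type} (G : SimpleGraph V) (ℓ : ℕ) where
  block : Fin ℓ → Set V
  lastBlock : Set V
  x : Fin (ℓ + 1) → V
  y : Fin ℓ → V
  path : (i : Fin ℓ) → G.Walk (y i) (x i.succ)
  x_mem : ∀ i : Fin ℓ, x i.castSucc ∈ block i
  y_mem : ∀ i : Fin ℓ, y i ∈ block i
  xlast_mem : x (Fin.last ℓ) ∈ lastBlock
  path_induced : ∀ i, IsInducedPathW (path i)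
  path_length : ∀ i, 2 ≤ (path i).length
  blocks_disjoint : ∀ i j, i ≠ j → Disjoint (block i) (block j)
  block_last_disjoint : ∀ i, Disjoint (block i) lastBlock
  block_path_inter : ∀ i j : Fin ℓ, ∀ w ∈ block i, w ∈ (path j).support →
      (j = i ∧ w = y i) ∨ ((j : ℕ) + 1 = (i : ℕ) ∧ w = x i.castSucc)
  last_path_inter : ∀ j : Fin ℓ, ∀ w ∈ lastBlock, w ∈ (path j).support →
      (j : ℕ) + 1 = ℓ ∧ w = x (Fin.last ℓ)
  paths_disjoint : ∀ i j : Fin ℓ, i ≠ j → ∀ w,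
      w ∈ (path i).support → w ∈ (path j).support → False
  edges_within : ∀ a b : V,
      a ∈ (⋃ i, block i) ∪ lastBlock ∪ (⋃ i, {w | w ∈ (path i).support}) →
      b ∈ (⋃ i, block i) ∪ lastBlock ∪ (⋃ i, {w | w ∈ (path i).support}) →
      G.Adj a b →
      (∃ i, a ∈ block i ∧ b ∈ block i) ∨ (a ∈ lastBlock ∧ b ∈ lastBlock) ∨
        (∃ i, a ∈ (path i).support ∧ b ∈ (path i).support)
  odd_path : ∀ i : Fin ℓ, ∃ p : G.Walk (x i.castSucc) (y i),
      IsInducedPathW p ∧ (∀ w ∈ p.support, w ∈ block i) ∧ Odd p.length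
  even_path : ∀ i : Fin ℓ, ∃ p : G.Walk (x i.castSucc) (y i),
      IsInducedPathW p ∧ (∀ w ∈ p.support, w ∈ block i) ∧ Even p.length
  last_connected : (G.induce lastBlock).Connected
  block_chrom : ∀ i, (G.induce (block i)).chromaticNumber ≤ 4

/-- The origin of a PCP. -/
def PCP.origin {V : Type} {G : SimpleGraph V} {ℓ : ℕ} (P : PCP G ℓ) : V := P.x 0

/-- The vertex set of a PCP. -/
def PCP.support {V : Type} {G : SimpleGraph V} {ℓ : ℕ} (P : PCP G ℓ) : Set V :=
  (⋃ i, P.block i) ∪ P.lastBlock ∪ (⋃ i, {w | w ∈ (P.path i).support})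

/-- The leftovers of a PCP: the chromatic number of its last block. -/
noncomputable def PCP.leftovers {V : Type} {G : SimpleGraph V} {ℓ : ℕ} (P : PCP G ℓ) : ℕ :=
  chiSet G P.lastBlock

/-- A strong PCP: every regular block contains an induced 5-cycle. -/
def PCP.IsStrong {V : Type} {G : SimpleGraph V} {ℓ : ℕ} (P : PCP G ℓ) : Prop :=
  ∀ i : Fin ℓ, ∃ f : cycleGraph 5 ↪g G, ∀ t, f t ∈ P.block i

/-- A PCP lies in the level `N_k` of the `v`-levelling and is rooted there: some vertex
`u' ∈ N_{k-1}` is adjacent to the origin and to no other vertex of the PCP. -/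
def PCP.IsRootedInLevel {V : Type} {G : SimpleGraph V} {ℓ : ℕ} (P : PCP G ℓ)
    (v : V) (k : ℕ) : Prop :=
  P.support ⊆ level G v k ∧
    ∃ u' ∈ level G v (k - 1), G.Adj u' P.origin ∧
      ∀ w ∈ P.support, w ≠ P.origin → ¬ G.Adj u' w

/-! ### Induced arcs and holes -/

/-- `p 0, …, p n` is an induced path of `G` of length `n` from `a` to `b` whose interior vertices
lie in `S`. The values of `p` beyond `n` are irrelevant. -/
structure InducedArc {V : Type} (G : SimpleGraph V) (S : Set V) (a b : V) (n : ℕ)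
    (p : ℕ → V) : Prop where
  start : p 0 = a
  finish : p n = b
  interior : ∀ i, 0 < i → i < n → p i ∈ S
  inj : ∀ i j, i < j → j ≤ n → p i ≠ p j
  adj : ∀ i j, i < j → j ≤ n → (G.Adj (p i) (p j) ↔ j = i + 1)

/-- Two disjoint vertex sets with no edge between them. -/
def Anticomplete {V : Type} (G : SimpleGraph V) (S T : Set V) : Prop :=
  ∀ s ∈ S, ∀ t ∈ T, s ≠ t ∧ ¬ G.Adj s t

lemma Anticomplete.symm {V : Type} {G : SimpleGraph V} {S T : Set V}
    (h : Anticomplete G S T) : Anticomplete G T S :=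
  fun t ht s hs => ⟨fun e => (h s hs t ht).1 e.symm, fun e => (h s hs t ht).2 e.symm⟩

lemma Anticomplete.mono {V : Type} {G : SimpleGraph V} {S T S' T' : Set V}
    (h : Anticomplete G S T) (hS : S' ⊆ S) (hT : T' ⊆ T) : Anticomplete G S' T' :=
  fun s hs t ht => h s (hS hs) t (hT ht)

section Arcs

variable {V : Type} {G : SimpleGraph V} {S T : Set V} {a b c : V} {n m : ℕ} {p q : ℕ → V}

lemma InducedArc.symm (hp : InducedArc G S a b n p) :
    InducedArc G S b a n (fun i => p (n - i)) where
  start := by simpa using hp.finish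
  finish := by simpa using hp.start
  interior i h0 hn := hp.interior _ (by omega) (by omega)
  inj i j hij hj := (hp.inj _ _ (by omega) (by omega)).symm
  adj i j hij hj := by
    rw [G.adj_comm, hp.adj _ _ (by omega) (by omega)]
    omega

lemma InducedArc.mono (hp : InducedArc G S a b n p) (hS : S ⊆ T) : InducedArc G T a b n p :=
  { hp with interior := fun i h0 hn => hS (hp.interior i h0 hn) }

lemma InducedArc.mem_insert (hp : InducedArc G S a b n p) {i : ℕ} (hi : i < n) :
    p i ∈ insert a S := by
  rcases Nat.eq_zero_or_pos i with rfl | h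
  · exact Or.inl hp.start
  · exact Or.inr (hp.interior i h hi)

/-- An arc between distinct nonadjacent vertices has length at least two. -/
lemma InducedArc.two_le (hp : InducedArc G S a b n p) (hab : a ≠ b) (hadj : ¬ G.Adj a b) :
    2 ≤ n := by
  by_contra h
  have h1 := hp.start
  have h2 := hp.finish
  obtain rfl | rfl : n = 0 ∨ n = 1 := by omega
  · exact hab (h1.symm.trans h2)
  · apply hadj
    rw [← h1, ← h2, hp.adj 0 1 (by omega) le_rfl]

lemma inducedArc_edge (hab : G.Adj a b) :
    InducedArc G ∅ a b 1 (fun i => if i = 0 then a else b) where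
  start := by simp
  finish := by simp
  interior i h0 h1 := by omega
  inj i j hij hj := by
    obtain rfl : i = 0 := by omega
    obtain rfl : j = 1 := by omega
    simpa using hab.ne
  adj i j hij hj := by
    obtain rfl : i = 0 := by omega
    obtain rfl : j = 1 := by omega
    simpa using hab

lemma InducedArc.concat (hp : InducedArc G S a b n p) (hq : InducedArc G T b c m q)
    (hn : 1 ≤ n) (hm : 1 ≤ m) (hST : Anticomplete G (insert a S) (insert c T)) :
    InducedArc G (insert b (S ∪ T)) a c (n + m)
      (fun i => if i ≤ n then p i else q (i - n)) := by
  have hqc : ∀ i, 0 < i → i ≤ m → q i ∈ insert c T := by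
    intro i h0 hi
    rcases hi.eq_or_lt with rfl | h
    · exact Or.inl hq.finish
    · exact Or.inr (hq.interior i h0 h)
  have hpq : p n = q 0 := hp.finish.trans hq.start.symm
  refine ⟨?_, ?_, ?_, ?_, ?_⟩
  · simpa using hp.start
  · have : ¬ n + m ≤ n := by omega
    simpa [this] using hq.finish
  · intro i h0 hi
    by_cases h : i ≤ n
    · simp only [h, if_true]
      rcases h.eq_or_lt with rfl | h
      · exact Or.inl hp.finish
      · exact Or.inr (Or.inl (hp.interior i h0 h))
    · simp only [h, if_false]
      exact Or.inr (Or.inr (hq.interior _ (by omega) (by omega)))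
  · intro i j hij hj
    by_cases h : j ≤ n
    · simp only [h, show i ≤ n by omega, if_true]
      exact hp.inj i j hij h
    · by_cases h' : i < n
      · simp only [h, h'.le, if_true, if_false]
        exact (hST _ (hp.mem_insert h') _ (hqc (j - n) (by omega) (by omega))).1
      · by_cases h'' : i = n
        · subst h''
          simp only [h, le_refl, if_true, if_false, hpq]
          exact hq.inj _ _ (by omega) (by omega)
        · simp only [h, show ¬ i ≤ n by omega, if_false]
          exact hq.inj _ _ (by omega) (by omega)
  · intro i j hij hj
    by_cases h : j ≤ n
    · simp only [h, show i ≤ n by omega, if_true]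
      exact hp.adj i j hij h
    · by_cases h' : i < n
      · simp only [h, h'.le, if_true, if_false]
        have := (hST _ (hp.mem_insert h') _ (hqc (j - n) (by omega) (by omega))).2
        exact iff_of_false this (by omega)
      · by_cases h'' : i = n
        · subst h''
          simp only [h, le_refl, if_true, if_false, hpq]
          rw [hq.adj _ _ (by omega) (by omega)]
          omega
        · simp only [h, show ¬ i ≤ n by omega, if_false]
          rw [hq.adj _ _ (by omega) (by omega)]
          omega

/-- Recognising an induced cycle listed as `f 0, …, f (N - 1)`. -/
lemma cycleGraph_embedding_of_fun {N : ℕ} {f : ℕ → V}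
    (hne : ∀ i j, i < j → j < N → f i ≠ f j)
    (hadj : ∀ i j, i < j → j < N →
      (G.Adj (f i) (f j) ↔ j = i + 1 ∨ (i = 0 ∧ j + 1 = N))) :
    Nonempty (cycleGraph N ↪g G) := by
  have key : ∀ i j : Fin N, i.val < j.val →
      (G.Adj (f i) (f j) ↔ (cycleGraph N).Adj i j) := by
    intro i j hij
    rw [hadj i j hij j.2, cycleGraph_adj', Fin.sub_val_of_le (Fin.le_def.2 hij.le),
      Fin.sub_def]
    have h1 : N - j.val + i.val < N := by have := j.2; omega
    simp only [Nat.mod_eq_of_lt h1]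
    have := j.2
    omega
  refine ⟨⟨⟨fun i => f i, ?_⟩, ?_⟩⟩
  · intro i j hij
    by_contra h
    rcases lt_or_gt_of_ne (fun e => h (Fin.ext e) : i.val ≠ j.val) with h' | h'
    · exact hne i j h' j.2 hij
    · exact hne j i h' i.2 hij.symm
  · intro i j
    change G.Adj (f i) (f j) ↔ _
    rcases lt_trichotomy i.val j.val with h | h | h
    · exact key i j h
    · obtain rfl := Fin.ext h
      simp
    · rw [G.adj_comm, key j i h, adj_comm]

/-- Two arcs with the same ends and anticomplete interiors close up to a hole. -/
lemma InducedArc.hole (hp : InducedArc G S a b n p) (hq : InducedArc G T a b m q)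
    (hn : 2 ≤ n) (hm : 2 ≤ m) (hST : Anticomplete G S T) :
    Nonempty (cycleGraph (n + m) ↪g G) := by
  have h0 : p 0 = q 0 := hp.start.trans hq.start.symm
  have h1 : p n = q m := hp.finish.trans hq.finish.symm
  apply cycleGraph_embedding_of_fun (f := fun i => if i ≤ n then p i else q (n + m - i))
  · intro i j hij hj
    by_cases h : j ≤ n
    · simp only [h, show i ≤ n by omega, if_true]
      exact hp.inj i j hij h
    · by_cases h' : i ≤ n
      · simp only [h, h', if_true, if_false]
        rcases Nat.eq_zero_or_pos i with rfl | hi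
        · rw [h0]
          exact hq.inj _ _ (by omega) (by omega)
        · rcases h'.eq_or_lt with rfl | hi'
          · rw [h1]
            exact (hq.inj _ _ (by omega) (by omega)).symm
          · exact (hST _ (hp.interior i hi hi') _
              (hq.interior _ (by omega) (by omega))).1
      · simp only [h, h', if_false]
        exact (hq.inj _ _ (by omega) (by omega)).symm
  · intro i j hij hj
    by_cases h : j ≤ n
    · simp only [h, show i ≤ n by omega, if_true]
      rw [hp.adj i j hij h]
      omega
    · by_cases h' : i ≤ n
      · simp only [h, h', if_true, if_false]
        rcases Nat.eq_zero_or_pos i with rfl | hi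
        · rw [h0, hq.adj _ _ (by omega) (by omega)]
          omega
        · rcases h'.eq_or_lt with rfl | hi'
          · rw [h1, G.adj_comm, hq.adj _ _ (by omega) (by omega)]
            omega
          · exact iff_of_false (hST _ (hp.interior i hi hi') _
              (hq.interior _ (by omega) (by omega))).2 (by omega)
      · simp only [h, h', if_false]
        rw [G.adj_comm, hq.adj _ _ (by omega) (by omega)]
        omega

/-! ### Reachability inside a vertex set -/

/-- The edges of `G` with both ends in `T`, as a graph on all of `V`. -/
def within (G : SimpleGraph V) (T : Set V) : SimpleGraph V where
  Adj x y := G.Adj x y ∧ x ∈ T ∧ y ∈ T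
  symm := ⟨fun _ _ h => ⟨h.1.symm, h.2.2, h.2.1⟩⟩
  loopless := ⟨fun _ h => G.loopless.irrefl _ h.1⟩

lemma within_mono (h : S ⊆ T) : within G S ≤ within G T :=
  fun _ _ e => ⟨e.1, h e.2.1, h e.2.2⟩

lemma within_reachable_of_adj (h : G.Adj a b) (ha : a ∈ T) (hb : b ∈ T) :
    (within G T).Reachable a b :=
  SimpleGraph.Adj.reachable ⟨h, ha, hb⟩

lemma within_reachable_of_walk (w : G.Walk a b) (h : ∀ x ∈ w.support, x ∈ T) :
    (within G T).Reachable a b := by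
  induction w with
  | nil => exact Reachable.refl _
  | cons e w ih =>
    simp only [Walk.support_cons, List.mem_cons, forall_eq_or_imp] at h
    exact (within_reachable_of_adj e h.1 (h.2 _ w.start_mem_support)).trans (ih h.2)

lemma within_reachable_of_connected (h : (G.induce T).Connected) (ha : a ∈ T) (hb : b ∈ T) :
    (within G T).Reachable a b :=
  (h.preconnected ⟨a, ha⟩ ⟨b, hb⟩).map
    (⟨Subtype.val, fun {x y} e => ⟨e, x.2, y.2⟩⟩ : G.induce T →g within G T)

/-- A shortest path inside `S ∪ {a, b}` is an induced arc. -/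
lemma exists_inducedArc (hab : a ≠ b) (h : (within G (insert a (insert b S))).Reachable a b) :
    ∃ n p, InducedArc G S a b n p := by
  set W := within G (insert a (insert b S))
  obtain ⟨w, hw⟩ := h.exists_walk_length_eq_dist
  -- a shortcut between the `i`-th and the `j`-th vertex cannot beat the distance
  have short : ∀ i j, i ≤ j → j ≤ w.length → ∀ u : W.Walk (w.getVert i) (w.getVert j),
      j ≤ i + u.length := by
    intro i j hij hj u
    have := W.dist_le (((w.take i).append u).append (w.drop j))
    simp only [Walk.length_append, Walk.take_length, Walk.drop_length] at this
    omega
  have hinj : ∀ i j, i < j → j ≤ w.length → w.getVert i ≠ w.getVert j := by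
    intro i j hij hj e
    have := short i j hij.le hj (Walk.nil.copy rfl e)
    simp at this
    omega
  have hpos : 0 < w.length := by
    rw [Nat.pos_iff_ne_zero]
    intro h0
    exact hab (Walk.eq_of_length_eq_zero h0)
  have hmem : ∀ i, i ≤ w.length → w.getVert i ∈ insert a (insert b S) := by
    intro i hi
    rcases hi.eq_or_lt with rfl | hi
    · simp
    · exact (w.adj_getVert_succ hi).2.1
  refine ⟨w.length, w.getVert, w.getVert_zero, w.getVert_length, ?_, hinj, ?_⟩
  · intro i h0 hi
    rcases hmem i hi.le with h | h | h
    · exact absurd (w.getVert_zero.trans h.symm) (hinj 0 i h0 hi.le)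
    · exact absurd (h.trans w.getVert_length.symm) (hinj i _ hi le_rfl)
    · exact h
  · intro i j hij hj
    constructor
    · intro e
      have e' : W.Adj (w.getVert i) (w.getVert j) := ⟨e, hmem i (by omega), hmem j hj⟩
      have := short i j hij.le hj (Walk.cons e' Walk.nil)
      rw [Walk.length_cons, Walk.length_nil] at this
      omega
    · rintro rfl
      exact (w.adj_getVert_succ (by omega)).1

end Arcs

/-! ### Shortest odd cycles -/

section OddCycles

variable {V : Type} {G : SimpleGraph V} {X U A : Set V} {m : ℕ} {c : ℕ → V}

/-- `c` traverses periodically a closed walk of odd length `m` inside `X`. -/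
structure OddClosed (G : SimpleGraph V) (X : Set V) (m : ℕ) (c : ℕ → V) : Prop where
  odd : Odd m
  per : ∀ i, c (i + m) = c i
  mem : ∀ i, c i ∈ X
  adj : ∀ i, G.Adj (c i) (c (i + 1))

lemma OddClosed.shift (h : OddClosed G X m c) (k : ℕ) : OddClosed G X m (fun i => c (k + i)) :=
  ⟨h.odd, fun i => by rw [← add_assoc, h.per], fun i => h.mem _, fun i => h.adj _⟩

/-- Closing up the segment `c i, …, c (i + L - 1)`. -/
lemma OddClosed.fold (h : OddClosed G X m c) (i L : ℕ) (hL : Odd L)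
    (e : G.Adj (c (i + (L - 1))) (c i)) : OddClosed G X L (fun k => c (i + k % L)) := by
  have hpos : 0 < L := hL.pos
  refine ⟨hL, fun k => by simp, fun k => h.mem _, fun k => ?_⟩
  have hk := Nat.mod_lt k hpos
  by_cases hlast : k % L + 1 = L
  · have h1 : (k + 1) % L = 0 := by
      rw [Nat.add_mod, ← Nat.dvd_iff_mod_eq_zero]
      rcases Nat.lt_or_ge 1 L with h | h
      · rw [Nat.mod_eq_of_lt h, hlast]
      · obtain rfl : L = 1 := by omega
        simp
    have h2 : k % L = L - 1 := by omega
    simpa only [h1, h2, add_zero] using e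
  · have h1 : (k + 1) % L = k % L + 1 := by
      rw [Nat.add_mod, Nat.mod_eq_of_lt (by omega : 1 < L), Nat.mod_eq_of_lt (by omega)]
    simpa only [h1, ← add_assoc] using h.adj (i + k % L)

lemma exists_oddClosed_of_not_colorable (h : ¬ (G.induce X).Colorable 2) :
    ∃ m c, OddClosed G X m c := by
  rw [two_colorable_iff_forall_loop_even] at h
  push Not at h
  obtain ⟨u, w, hw⟩ := h
  have hodd : Odd w.length := Nat.not_even_iff_odd.1 hw
  have hpos : 0 < w.length := hodd.pos
  refine ⟨w.length, fun k => (w.getVert (k % w.length) : V), hodd, fun k => by simp,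
    fun k => Subtype.prop _, fun k => ?_⟩
  have hk := Nat.mod_lt k hpos
  have e : G.Adj (w.getVert (k % w.length) : V) (w.getVert (k % w.length + 1)) :=
    w.adj_getVert_succ hk
  by_cases hlast : k % w.length + 1 = w.length
  · have h1 : (k + 1) % w.length = 0 := by
      rw [← Nat.mod_add_mod, hlast, Nat.mod_self]
    rw [hlast, w.getVert_length] at e
    simpa only [h1, w.getVert_zero] using e
  · have h1 : (k + 1) % w.length = k % w.length + 1 := by
      rw [← Nat.mod_add_mod, Nat.mod_eq_of_lt (by omega)]
    simpa only [h1] using e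

/-- A shortest odd closed walk has no repetition and no chord. -/
lemma OddClosed.induced (h : OddClosed G X m c)
    (hmin : ∀ m' c', OddClosed G X m' c' → m ≤ m') {i j : ℕ} (hij : i < j) (hj : j ≤ i + m - 2) :
    c i ≠ c j ∧ (G.Adj (c i) (c j) ↔ j = i + 1) := by
  obtain ⟨d, rfl⟩ : ∃ d, j = i + d := ⟨j - i, by omega⟩
  have hper := h.per i
  obtain ⟨r, hr⟩ := h.odd
  constructor
  · intro e
    rcases Nat.even_or_odd d with hd | hd
    · -- the other arc, of odd length `m - d`, closes up
      obtain ⟨s, hs⟩ := hd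
      have e' := h.adj (i + m - 1)
      rw [show i + m - 1 + 1 = i + m by omega, hper, e] at e'
      have := hmin _ _ (h.fold (i + d) (m - d) ⟨r - s, by omega⟩
        (by rwa [show i + d + (m - d - 1) = i + m - 1 by omega]))
      omega
    · have e' := h.adj (i + (d - 1))
      rw [show i + (d - 1) + 1 = i + d by omega, ← e] at e'
      have := hmin _ _ (h.fold i d hd e')
      omega
  · constructor
    · intro e
      by_contra hd1
      rcases Nat.even_or_odd d with hd | hd
      · have := hmin _ _ (h.fold i (d + 1) hd.add_one (by simpa using e.symm))
        omega
      · obtain ⟨s, hs⟩ := hd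
        have := hmin _ _ (h.fold (i + d) (m - d + 1) ⟨r - s, by omega⟩
          (by rwa [show i + d + (m - d + 1 - 1) = i + m by omega, hper]))
        omega
    · intro e
      rw [e]
      exact h.adj i

/-- The segment `c s, …, c t` of a shortest odd cycle, extended by a vertex `e` whose only
neighbour on it is `c s` and a vertex `a` whose only neighbour on it is `c t`. -/
lemma OddClosed.arc (h : OddClosed G X m c)
    (hmin : ∀ m' c', OddClosed G X m' c' → m ≤ m') {s t : ℕ} (hst : s ≤ t)
    (ht : t ≤ s + m - 2) {e a : V} (hea : e ≠ a) (hnea : ¬ G.Adj e a) (heX : e ∉ X) (haX : a ∉ X)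
    (he : ∀ j, s ≤ j → j ≤ t → (G.Adj e (c j) ↔ j = s))
    (ha : ∀ j, s ≤ j → j ≤ t → (G.Adj a (c j) ↔ j = t)) :
    ∃ p, InducedArc G X e a (t - s + 2) p := by
  refine ⟨fun i => if i = 0 then e else if i ≤ t - s + 1 then c (s + (i - 1)) else a,
    by simp, by simp, ?_, ?_, ?_⟩
  · intro i h0 hi
    simp only [h0.ne', show i ≤ t - s + 1 by omega, if_true, if_false]
    exact h.mem _
  · intro i j hij hj
    simp only [show j ≠ 0 by omega, if_false]
    by_cases hi : i = 0 <;> by_cases hj' : j ≤ t - s + 1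
    · simp only [hi, hj', if_true]
      exact fun E => heX (E ▸ h.mem _)
    · simpa only [hi, hj', if_true, if_false] using hea
    · simp only [hi, hj', show i ≤ t - s + 1 by omega, if_true, if_false]
      exact (h.induced hmin (by omega) (by omega)).1
    · simp only [hi, hj', show i ≤ t - s + 1 by omega, if_true, if_false]
      exact fun E => haX (E ▸ h.mem _)
  · intro i j hij hj
    simp only [show j ≠ 0 by omega, if_false]
    by_cases hi : i = 0 <;> by_cases hj' : j ≤ t - s + 1
    · simp only [hi, hj', if_true]
      rw [he _ (by omega) (by omega)]
      omega
    · simp only [hi, hj', if_true, if_false]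
      exact iff_of_false hnea (by omega)
    · simp only [hi, hj', show i ≤ t - s + 1 by omega, if_true, if_false]
      rw [(h.induced hmin (by omega) (by omega)).2]
      omega
    · simp only [hi, hj', show i ≤ t - s + 1 by omega, if_true, if_false]
      rw [G.adj_comm, ha _ (by omega) (by omega)]
      omega

/-! ### Sets dominated by a stable set with a common upper connection -/

/-- In a triangle-free graph every closed walk of length five is an induced cycle. -/
lemma no_closed_five (h3 : G.CliqueFree 3) (h5 : NoInducedCycle G 5) {x₀ x₁ x₂ x₃ x₄ : V}
    (h01 : G.Adj x₀ x₁) (h12 : G.Adj x₁ x₂) (h23 : G.Adj x₂ x₃) (h34 : G.Adj x₃ x₄)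
    (h40 : G.Adj x₄ x₀) : False := by
  have tri : ∀ {x y z : V}, G.Adj x y → G.Adj y z → ¬ G.Adj x z := fun hxy hyz hxz => by
    classical
    exact h3 _ (is3Clique_triple_iff.2 ⟨hxy, hxz, hyz⟩)
  have h02 := tri h01 h12
  have h13 := tri h12 h23
  have h24 := tri h23 h34
  have h03 := tri h40.symm h34.symm
  have h14 := tri h01.symm h40.symm
  have n02 : x₀ ≠ x₂ := by rintro rfl; exact h03 h23
  have n13 : x₁ ≠ x₃ := by rintro rfl; exact h14 h34
  have n24 : x₂ ≠ x₄ := by rintro rfl; exact h02 h40.symm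
  have n03 : x₀ ≠ x₃ := by rintro rfl; exact h13 h01.symm
  have n14 : x₁ ≠ x₄ := by rintro rfl; exact h24 h12.symm
  obtain ⟨f⟩ := cycleGraph_embedding_of_fun (G := G) (N := 5)
    (f := fun i => match i with | 0 => x₀ | 1 => x₁ | 2 => x₂ | 3 => x₃ | _ => x₄)
    (by
      intro i j hij hj
      interval_cases j <;> interval_cases i <;>
        simp_all [h01.ne, h12.ne, h23.ne, h34.ne, h40.ne.symm])
    (by
      intro i j hij hj
      interval_cases j <;> interval_cases i <;> simp_all [h40.symm])
  exact h5.false f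

/-- Let `A` be stable and dominate `X`, and suppose that any two members of `A` are joined by an
arc through a set `U` anticomplete to `X`. An arc through `X` and an arc through `U` with the same
ends form a hole, so all arcs through `X` with given ends in `A` have the same parity. A shortest
odd cycle in `X` would violate this. -/
theorem bipartite_of_dominated (h3 : G.CliqueFree 3) (h5 : NoInducedCycle G 5)
    (heven : ∀ n : ℕ, 6 ≤ n → Even n → NoInducedCycle G n)
    (hstable : ∀ a ∈ A, ∀ b ∈ A, ¬ G.Adj a b) (hAX : ∀ a ∈ A, a ∉ X)
    (hdom : ∀ x ∈ X, ∃ a ∈ A, G.Adj a x) (hUX : Anticomplete G U X)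
    (hconn : ∀ a ∈ A, ∀ b ∈ A, a ≠ b → ∃ n p, InducedArc G U a b n p) :
    (G.induce X).Colorable 2 := by
  classical
  by_contra hcol
  have tri : ∀ {x y z : V}, G.Adj x y → G.Adj y z → ¬ G.Adj x z := fun hxy hyz hxz =>
    h3 _ (is3Clique_triple_iff.2 ⟨hxy, hxz, hyz⟩)
  obtain ⟨m, ⟨c, hc⟩, hmin⟩ : ∃ m, (∃ c, OddClosed G X m c) ∧
      ∀ m' c', OddClosed G X m' c' → m ≤ m' :=
    ⟨_, Nat.find_spec (exists_oddClosed_of_not_colorable hcol),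
      fun m' c' h => Nat.find_min' _ ⟨c', h⟩⟩
  have hm4 : 4 ≤ m := by
    obtain ⟨r, hr⟩ := hc.odd
    by_contra hlt
    have h0 := hc.per 0
    have e1 := hc.adj 0
    have e2 := hc.adj 1
    have e3 := hc.adj 2
    obtain rfl | rfl : m = 1 ∨ m = 3 := by omega
    · simp only [zero_add] at h0 e1
      rw [h0] at e1
      exact G.loopless.irrefl _ e1
    · simp only [zero_add, Nat.reduceAdd] at h0 e1 e2 e3
      rw [h0] at e3
      exact tri e1 e2 e3.symm
  -- two arcs through `X` of lengths at least three, different parities, and the same ends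
  have parity : ∀ a ∈ A, ∀ e ∈ A, e ≠ a → ∀ n₁ n₂ p₁ p₂, InducedArc G X e a n₁ p₁ →
      InducedArc G X e a n₂ p₂ → 3 ≤ n₁ → Odd n₁ → 4 ≤ n₂ → Even n₂ → False := by
    intro a ha e he hea n₁ n₂ p₁ p₂ hp₁ hp₂ h1 h1' h2 h2'
    obtain ⟨q, r, hr⟩ := hconn e he a ha hea
    have hq := hr.two_le hea (hstable e he a ha)
    rcases Nat.even_or_odd q with hq' | hq'
    · obtain ⟨f⟩ := hr.hole hp₂ hq (by omega) hUX
      exact (heven (q + n₂) (by omega) (hq'.add h2')).false f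
    · have : 3 ≤ q := by
        obtain ⟨t, ht⟩ := hq'
        omega
      obtain ⟨f⟩ := hr.hole hp₁ hq (by omega) hUX
      exact (heven (q + n₁) (by omega) (hq'.add_odd h1')).false f
  -- the least odd distance along the cycle between two neighbours of a member of `A`
  have hex : ∃ g, Odd g ∧ ∃ i, ∃ a ∈ A, G.Adj a (c i) ∧ G.Adj a (c (i + g)) := by
    obtain ⟨a, ha, e⟩ := hdom _ (hc.mem 0)
    exact ⟨m, hc.odd, 0, a, ha, e, by rwa [hc.per]⟩
  obtain ⟨g, ⟨hg, i₀, a, ha, ha0, hag⟩, hgmin'⟩ : ∃ g,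
      (Odd g ∧ ∃ i, ∃ a ∈ A, G.Adj a (c i) ∧ G.Adj a (c (i + g))) ∧
      ∀ g', (Odd g' ∧ ∃ i, ∃ a ∈ A, G.Adj a (c i) ∧ G.Adj a (c (i + g'))) → g ≤ g' :=
    ⟨_, Nat.find_spec hex, fun g' h => Nat.find_min' _ h⟩
  have hgm : g ≤ m := by
    obtain ⟨b, hb, e⟩ := hdom _ (hc.mem 0)
    exact hgmin' m ⟨hc.odd, 0, b, hb, e, by rwa [hc.per]⟩
  have hgmin : ∀ b ∈ A, ∀ i j, i < j → G.Adj b (c (i₀ + i)) → G.Adj b (c (i₀ + j)) →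
      Odd (j - i) → g ≤ j - i := by
    intro b hb i j hij h1 h2 hodd
    refine hgmin' _ ⟨hodd, i₀ + i, b, hb, h1, ?_⟩
    rwa [show i₀ + i + (j - i) = i₀ + j by omega]
  clear hgmin' hex
  -- rotate the cycle so that the gap starts at the vertex `c 0`
  have hc' := hc.shift i₀
  obtain ⟨c', hcc⟩ : ∃ c' : ℕ → V, c' = fun i => c (i₀ + i) := ⟨_, rfl⟩
  rw [← hcc] at hc'
  replace ha0 : G.Adj a (c' 0) := by simpa [hcc] using ha0
  replace hag : G.Adj a (c' g) := by simpa [hcc] using hag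
  replace hgmin : ∀ b ∈ A, ∀ i j, i < j → G.Adj b (c' i) → G.Adj b (c' j) →
      Odd (j - i) → g ≤ j - i := by
    simpa only [hcc] using hgmin
  clear hcc hc
  obtain ⟨r, hr⟩ := hg
  obtain ⟨r', hr'⟩ := hc'.odd
  have ha_gap : ∀ j, 0 < j → j < g → ¬ G.Adj a (c' j) := by
    intro j h0 hj e
    rcases Nat.even_or_odd j with ⟨s, hs⟩ | hodd
    · have := hgmin a ha j g hj e hag ⟨r - s, by omega⟩
      omega
    · have := hgmin a ha 0 j h0 ha0 e hodd
      omega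
  rcases hgm.eq_or_lt with rfl | hlt
  · -- every member of `A` has at most one neighbour on the cycle: go both ways round from `c 2`
    obtain ⟨e, he, he2⟩ := hdom _ (hc'.mem 2)
    have hea : e ≠ a := by
      rintro rfl
      exact ha_gap 2 (by omega) (by omega) he2
    have e_gap : ∀ j, j ≤ g → j ≠ 2 → ¬ G.Adj e (c' j) := by
      intro j hj hj2 E
      have hper := hc'.per j
      rcases lt_or_gt_of_ne hj2 with h | h
      · rcases Nat.even_or_odd (2 - j) with ⟨s, hs⟩ | hodd
        · rw [← hper] at E
          have := hgmin e he 2 (j + g) (by omega) he2 E ⟨r - s, by omega⟩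
          omega
        · have := hgmin e he j 2 h E he2 hodd
          omega
      · rcases Nat.even_or_odd (j - 2) with ⟨s, hs⟩ | hodd
        · have := hgmin e he j (2 + g) (by omega) E (by rwa [hc'.per]) ⟨r - s, by omega⟩
          omega
        · have := hgmin e he 2 j h he2 E hodd
          omega
    obtain ⟨p₁, hp₁⟩ := hc'.arc hmin (s := 2) (t := g) (by omega) (by omega) hea
      (hstable e he a ha) (hAX e he) (hAX a ha)
      (fun j h1 h2 => ⟨fun E => by by_contra h; exact e_gap j h2 h E, fun E => E ▸ he2⟩)
      (fun j h1 h2 => ⟨fun E => by by_contra h; exact ha_gap j (by omega) (by omega) E,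
        fun E => E ▸ hag⟩)
    obtain ⟨p₂, hp₂⟩ := hc'.arc hmin (s := 0) (t := 2) (by omega) (by omega) hea.symm
      (hstable a ha e he) (hAX a ha) (hAX e he)
      (fun j h1 h2 => ⟨fun E => by by_contra h; exact ha_gap j (by omega) (by omega) E,
        fun E => E ▸ ha0⟩)
      (fun j h1 h2 => ⟨fun E => by by_contra h; exact e_gap j (by omega) h E, fun E => E ▸ he2⟩)
    exact parity a ha e he hea _ _ _ _ hp₁ hp₂.symm (by omega) ⟨r, by omega⟩ (by omega)
      ⟨2, by omega⟩
  · obtain ⟨e, he, he1⟩ := hdom _ (hc'.mem 1)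
    have hea : e ≠ a := by
      rintro rfl
      exact tri ha0 (hc'.adj 0) he1
    have hg1 : 1 < g := by
      by_contra h
      obtain rfl : g = 1 := by omega
      exact tri ha0 (hc'.adj 0) hag
    -- `c t` is the last neighbour of `e` on the segment `c 1, …, c g`
    obtain ⟨t, ht1, htg, het, htmax⟩ : ∃ t, 1 ≤ t ∧ t ≤ g ∧ G.Adj e (c' t) ∧
        ∀ j, t < j → j ≤ g → ¬ G.Adj e (c' j) := by
      refine ⟨Nat.findGreatest (fun j => G.Adj e (c' j)) g, Nat.le_findGreatest hg1.le he1,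
        Nat.findGreatest_le _,
        Nat.findGreatest_spec (P := fun j => G.Adj e (c' j)) hg1.le he1, fun j h1 h2 =>
        Nat.findGreatest_is_greatest h1 h2⟩
    have htodd : Odd t := by
      by_contra hev
      obtain ⟨s, hs⟩ := Nat.not_odd_iff_even.1 hev
      have := hgmin e he 1 t (by omega) he1 het ⟨s - 1, by omega⟩
      omega
    obtain ⟨s, hs⟩ := htodd
    rcases htg.eq_or_lt with rfl | htg
    · -- `a`, `c 0`, `c 1`, `e`, `c g` is a closed walk of length five
      exact no_closed_five h3 h5 ha0 (hc'.adj 0) he1.symm het hag.symm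
    · obtain ⟨p₂, hp₂⟩ := hc'.arc hmin (s := t) (t := g) (by omega) (by omega) hea
        (hstable e he a ha) (hAX e he) (hAX a ha)
        (fun j h1 h2 => ⟨fun E => by by_contra h; exact htmax j (by omega) h2 E,
          fun E => E ▸ het⟩)
        (fun j h1 h2 => ⟨fun E => by by_contra h; exact ha_gap j (by omega) (by omega) E,
          fun E => E ▸ hag⟩)
      obtain ⟨p₁, hp₁⟩ := hc'.arc hmin (s := 0) (t := 1) (by omega) (by omega) hea.symm
        (hstable a ha e he) (hAX a ha) (hAX e he)
        (fun j h1 h2 => ⟨fun E => by by_contra h; exact ha_gap j (by omega) (by omega) E,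
          fun E => E ▸ ha0⟩)
        (fun j h1 h2 => ⟨fun E => by
            by_contra h
            obtain rfl : j = 0 := by omega
            exact tri E (hc'.adj 0) he1, fun E => E ▸ he1⟩)
      exact parity a ha e he hea _ _ _ _ hp₁.symm hp₂ (by omega) ⟨1, by omega⟩ (by omega)
        ⟨r - s + 1, by omega⟩

end OddCycles

/-! ### Levels -/

section Levels

variable {V : Type} {G : SimpleGraph V} {v : V}

/-- The union of the levels `N_0, …, N_{j-1}`. -/
def levelsBelow (G : SimpleGraph V) (v : V) (j : ℕ) : Set V := {z | ∃ i < j, z ∈ level G v i}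

lemma level_ne {i j : ℕ} {a b : V} (ha : a ∈ level G v i) (hb : b ∈ level G v j) (hij : i ≠ j) :
    a ≠ b := by
  rintro rfl
  exact hij (ha.2.symm.trans hb.2)

lemma level_not_adj {i j : ℕ} {a b : V} (ha : a ∈ level G v i) (hb : b ∈ level G v j)
    (hij : i + 1 < j) : ¬ G.Adj a b := by
  intro e
  obtain ⟨w, hw⟩ := ha.1.exists_walk_length_eq_dist
  have := G.dist_le (w.append (Walk.cons e Walk.nil))
  rw [Walk.length_append, Walk.length_cons, Walk.length_nil] at this
  have h1 := ha.2
  have h2 := hb.2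
  omega

lemma levelsBelow_anticomplete {j k : ℕ} {X : Set V} (hX : X ⊆ level G v k) (hjk : j < k) :
    Anticomplete G (levelsBelow G v j) X := by
  rintro s ⟨i, hi, hs⟩ t ht
  exact ⟨level_ne hs (hX ht) (by omega), level_not_adj hs (hX ht) (by omega)⟩

lemma level_reachable {j : ℕ} {z : V} {T : Set V} (hz : z ∈ level G v j) (hzT : z ∈ T)
    (hT : levelsBelow G v j ⊆ T) : (within G T).Reachable v z := by
  obtain ⟨w, hw⟩ := hz.1.exists_walk_length_eq_dist
  apply within_reachable_of_walk w
  intro x hx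
  obtain ⟨i, rfl, hi⟩ := Walk.mem_support_iff_exists_getVert.1 hx
  rcases hi.eq_or_lt with rfl | hi
  · rwa [w.getVert_length]
  · apply hT
    have := G.dist_le (w.take i)
    rw [Walk.take_length] at this
    have hz2 := hz.2
    exact ⟨_, by omega, (w.take i).reachable, rfl⟩

/-- Two vertices of a level are joined by an arc through the lower levels. -/
lemma exists_arc_below {j : ℕ} {a b : V} (ha : a ∈ level G v j) (hb : b ∈ level G v j)
    (hab : a ≠ b) : ∃ n p, InducedArc G (levelsBelow G v j) a b n p := by
  apply exists_inducedArc hab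
  have hsub : levelsBelow G v j ⊆ insert a (insert b (levelsBelow G v j)) :=
    fun x hx => Or.inr (Or.inr hx)
  exact (level_reachable ha (Or.inl rfl) hsub).symm.trans
    (level_reachable hb (Or.inr (Or.inl rfl)) hsub)

end Levels

/-! ### The active lift dominates the last block -/

section Lift

variable {V : Type} {G : SimpleGraph V}

lemma IsInducedPathW.inducedArc {a b : V} {B : Set V} {p : G.Walk a b} (hp : IsInducedPathW p)
    (hB : ∀ w ∈ p.support, w ∈ B) : InducedArc G (B \ {a, b}) a b p.length p.getVert := by
  have hinj : ∀ i j, i < j → j ≤ p.length → p.getVert i ≠ p.getVert j := fun i j hij hj e =>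
    hij.ne (hp.1.getVert_injOn (show i ≤ p.length by omega) hj e)
  refine ⟨p.getVert_zero, p.getVert_length, fun i h0 hi => ⟨hB _ (p.getVert_mem_support i), ?_⟩,
    hinj, fun i j hij hj => ⟨fun e => ?_, ?_⟩⟩
  · rintro (h | h)
    · exact hinj 0 i h0 hi.le (p.getVert_zero.trans h.symm)
    · exact hinj i _ hi le_rfl (Eq.trans h p.getVert_length.symm)
  · have := hp.2 _ (p.getVert_mem_support i) _ (p.getVert_mem_support j) e
    rw [← Walk.adj_toSubgraph_iff_mem_edges, Walk.toSubgraph_adj_iff] at this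
    obtain ⟨r, hr, hrl⟩ := this
    rw [Sym2.eq_iff] at hr
    have inj : ∀ x y, x ≤ p.length → y ≤ p.length → p.getVert x = p.getVert y → x = y :=
      fun x y hx hy h => hp.1.getVert_injOn hx hy h
    rcases hr with ⟨h1, h2⟩ | ⟨h1, h2⟩
    · have := inj _ _ (by omega) (by omega) h1
      have := inj _ _ (by omega) (by omega) h2
      omega
    · have := inj _ _ (by omega) (by omega) h1
      have := inj _ _ (by omega) (by omega) h2
      omega
  · rintro rfl
    exact p.adj_getVert_succ (by omega)

/-- Even and odd induced paths with common ends all have length at least two. -/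
lemma two_le_of_parities {S T : Set V} {a b : V} {n m : ℕ} {p q : ℕ → V}
    (hp : InducedArc G S a b n p) (hq : InducedArc G T a b m q) (hn : Odd n) (hm : Even m) :
    a ≠ b ∧ 2 ≤ n ∧ 2 ≤ m := by
  have hab : a ≠ b := by
    have := hp.inj 0 n hn.pos le_rfl
    rwa [hp.start, hp.finish] at this
  have hnadj : ¬ G.Adj a b := by
    intro e
    rcases Nat.eq_zero_or_pos m with h0 | h0
    · subst h0
      exact hab (hq.start.symm.trans hq.finish)
    · rw [← hq.start, ← hq.finish, hq.adj 0 m h0 le_rfl] at e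
      subst e
      exact absurd hm (by decide)
  exact ⟨hab, hp.two_le hab hnadj, hq.two_le hab hnadj⟩

/-- The blocks and paths preceding the `i`-th block. -/
def PCP.before {ℓ : ℕ} (P : PCP G ℓ) (i : Fin ℓ) : Set V :=
  {z | ∃ j < i, z ∈ P.block j ∨ z ∈ (P.path j).support}

/-- The path following the last regular block, together with the last block. -/
def PCP.tail {n : ℕ} (P : PCP G (n + 1)) : Set V :=
  {z | z ∈ (P.path (Fin.last n)).support} ∪ P.lastBlock

section Structure

variable {n : ℕ} (P : PCP G (n + 1))

lemma PCP.before_subset : P.before (Fin.last n) ⊆ P.support := by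
  rintro z ⟨j, -, h | h⟩
  · exact Or.inl (Or.inl (Set.mem_iUnion.2 ⟨j, h⟩))
  · exact Or.inr (Set.mem_iUnion.2 ⟨j, h⟩)

lemma PCP.block_subset (i : Fin (n + 1)) : P.block i ⊆ P.support :=
  fun _ h => Or.inl (Or.inl (Set.mem_iUnion.2 ⟨i, h⟩))

lemma PCP.tail_subset : P.tail ⊆ P.support := by
  rintro z (h | h)
  · exact Or.inr (Set.mem_iUnion.2 ⟨_, h⟩)
  · exact Or.inl (Or.inr h)

/-- The part of the PCP before the last regular block meets the rest only in its entry vertex. -/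
lemma PCP.before_inter {z : V} (hz : z ∈ P.before (Fin.last n))
    (hz' : z ∈ P.block (Fin.last n) ∪ P.tail) : z = P.x (Fin.last n).castSucc := by
  obtain ⟨j, hj, h⟩ := hz
  have hjn : (j : ℕ) < n := hj
  rcases h with h | h
  · rcases hz' with h' | h' | h'
    · exact absurd h' (Set.disjoint_left.1 (P.blocks_disjoint _ _ hj.ne) h)
    · rcases P.block_path_inter _ _ z h h' with ⟨e, -⟩ | ⟨e, -⟩
      · exact absurd e hj.ne'
      · simp only [Fin.val_last] at e
        omega
    · exact absurd h' (Set.disjoint_left.1 (P.block_last_disjoint _) h)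
  · rcases hz' with h' | h' | h'
    · rcases P.block_path_inter _ _ z h' h with ⟨e, -⟩ | ⟨-, e⟩
      · exact absurd e hj.ne
      · exact e
    · exact (P.paths_disjoint _ _ hj.ne z h h').elim
    · have := (P.last_path_inter _ z h' h).1
      omega

/-- The last regular block meets the tail only in its exit vertex. -/
lemma PCP.block_inter_tail {z : V} (hz : z ∈ P.block (Fin.last n)) (hz' : z ∈ P.tail) :
    z = P.y (Fin.last n) := by
  rcases hz' with h' | h'
  · rcases P.block_path_inter _ _ z hz h' with ⟨-, e⟩ | ⟨e, -⟩
    · exact e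
    · omega
  · exact absurd h' (Set.disjoint_left.1 (P.block_last_disjoint _) hz)

lemma PCP.before_anticomplete :
    Anticomplete G (P.before (Fin.last n) \ {P.x (Fin.last n).castSucc})
      ((P.block (Fin.last n) ∪ P.tail) \ {P.x (Fin.last n).castSucc}) := by
  rintro s ⟨hs, hsx⟩ t ⟨ht, htx⟩
  refine ⟨fun e => hsx (P.before_inter hs (e ▸ ht)), fun e => ?_⟩
  have key1 : s ∉ P.block (Fin.last n) ∪ P.tail := fun h => hsx (P.before_inter hs h)
  have key2 : t ∉ P.before (Fin.last n) := fun h => htx (P.before_inter h ht)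
  rcases P.edges_within s t (P.before_subset hs)
    (ht.elim (fun h => P.block_subset _ h) (fun h => P.tail_subset h)) e
    with ⟨i, h, h'⟩ | ⟨h, -⟩ | ⟨i, h, h'⟩
  · rcases (Fin.le_last i).eq_or_lt with rfl | hi
    · exact key1 (Or.inl h)
    · exact key2 ⟨i, hi, Or.inl h'⟩
  · exact key1 (Or.inr (Or.inr h))
  · rcases (Fin.le_last i).eq_or_lt with rfl | hi
    · exact key1 (Or.inr (Or.inl h))
    · exact key2 ⟨i, hi, Or.inr h'⟩

lemma PCP.block_anticomplete_tail :
    Anticomplete G (P.block (Fin.last n) \ {P.y (Fin.last n)})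
      (P.tail \ {P.y (Fin.last n)}) := by
  rintro s ⟨hs, hsy⟩ t ⟨ht, hty⟩
  refine ⟨fun e => hsy (P.block_inter_tail hs (e ▸ ht)), fun e => ?_⟩
  rcases P.edges_within s t (P.block_subset _ hs) (P.tail_subset ht) e
    with ⟨i, h, h'⟩ | ⟨h, -⟩ | ⟨i, h, h'⟩
  · have hi : i = Fin.last n := by
      by_contra hi
      exact Set.disjoint_left.1 (P.blocks_disjoint _ _ hi) h hs
    subst hi
    exact hty (P.block_inter_tail h' ht)
  · exact hsy (P.block_inter_tail hs (Or.inr h))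
  · rcases (Fin.le_last i).eq_or_lt with rfl | hi
    · exact hsy (P.block_inter_tail hs (Or.inl h))
    · have hin : (i : ℕ) < n := hi
      rcases ht with ht | ht
      · exact P.paths_disjoint _ _ hi.ne t h' ht
      · have := (P.last_path_inter _ t ht h').1
        omega

/-- The exit vertex of the last regular block is joined inside the tail to the last block. -/
lemma PCP.tail_reachable {h : V} (hh : h ∈ P.lastBlock) {T : Set V} (hT : P.tail ⊆ T) :
    (within G T).Reachable (P.y (Fin.last n)) h :=
  (within_reachable_of_walk (P.path (Fin.last n)) fun _ hx => hT (Or.inl hx)).trans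
    ((within_reachable_of_connected P.last_connected P.xlast_mem hh).mono
      (within_mono fun _ hx => hT (Or.inr hx)))

/-- The origin is joined inside the initial part of the PCP to the last regular block. -/
lemma PCP.before_reachable {T : Set V} (hT : P.before (Fin.last n) ⊆ T) :
    (within G T).Reachable P.origin (P.x (Fin.last n).castSucc) := by
  have key : ∀ i (hi : i ≤ n), (within G T).Reachable P.origin (P.x ⟨i, by omega⟩) := by
    intro i
    induction i with
    | zero => exact fun _ => Reachable.refl _
    | succ i ih =>
      intro hi
      have hlt : (⟨i, by omega⟩ : Fin (n + 1)) < Fin.last n := by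
        rw [Fin.lt_def]
        exact hi
      obtain ⟨p, -, hp, -⟩ := P.odd_path ⟨i, by omega⟩
      exact (ih (by omega)).trans
        ((within_reachable_of_walk p fun x hx => hT ⟨_, hlt, Or.inl (hp x hx)⟩).trans
        (within_reachable_of_walk (P.path ⟨i, by omega⟩)
          fun x hx => hT ⟨_, hlt, Or.inr hx⟩))
  exact key n le_rfl

/-- A vertex of the PCP other than the entry vertex of the last regular block, in that block or
in the tail, is not the origin. -/
lemma PCP.ne_origin {t : V} (ht : t ∈ P.block (Fin.last n) ∪ P.tail)
    (htx : t ≠ P.x (Fin.last n).castSucc) : t ≠ P.origin := by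
  rintro rfl
  rcases Nat.eq_zero_or_pos n with rfl | hn
  · exact htx rfl
  · exact htx (P.before_inter ⟨0, Fin.lt_def.2 hn, Or.inl (P.x_mem 0)⟩ ht)

end Structure

/-- A vertex `w` one level up with a neighbour in the last block but none in the last regular
block would see an arc to the exit of that block through the tail, and an arc to its entry through
the upper levels, the root and the earlier part of the PCP. Together with the odd or the even path
across the block they form holes of both parities. -/
theorem PCP.exists_adj_block (heven : ∀ n : ℕ, 6 ≤ n → Even n → NoInducedCycle G n)
    {v : V} {K n : ℕ} (P : PCP G (n + 1)) (hroot : P.IsRootedInLevel v (K + 1))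
    {w h : V} (hw : w ∈ level G v K) (hh : h ∈ P.lastBlock) (hwh : G.Adj w h) :
    ∃ s ∈ P.block (Fin.last n), G.Adj s w := by
  by_contra! hno
  obtain ⟨hlev, u, hu, huo, hunot⟩ := hroot
  rw [Nat.add_sub_cancel] at hu
  set x := P.x (Fin.last n).castSucc with hx
  set y := P.y (Fin.last n) with hy
  set B := P.block (Fin.last n) with hB
  have hxB : x ∈ B := P.x_mem _
  have hyB : y ∈ B := P.y_mem _
  have hytail : y ∈ P.tail := Or.inl (Walk.start_mem_support _)
  have hBlev : B ⊆ level G v (K + 1) := fun _ hz => hlev (P.block_subset _ hz)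
  have htlev : P.tail ⊆ level G v (K + 1) := fun _ hz => hlev (P.tail_subset hz)
  obtain ⟨p₁, hp₁, hp₁B, hodd⟩ := P.odd_path (Fin.last n)
  obtain ⟨p₀, hp₀, hp₀B, hev⟩ := P.even_path (Fin.last n)
  have arc₁ : InducedArc G (B \ {x, y}) x y _ _ := hp₁.inducedArc hp₁B
  have arc₀ : InducedArc G (B \ {x, y}) x y _ _ := hp₀.inducedArc hp₀B
  obtain ⟨hxy, hl₁, hl₀⟩ := two_le_of_parities arc₁ arc₀ hodd hev
  -- the sets through which the two outer arcs run
  set Z := (levelsBelow G v K ∪ {u} ∪ P.before (Fin.last n)) \ {x} with hZ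
  set F := P.tail \ {y} with hF
  have hwB : ∀ z ∈ B, w ≠ z ∧ ¬ G.Adj z w := fun z hz =>
    ⟨level_ne hw (hBlev hz) (by omega), hno z hz⟩
  have hZsub : levelsBelow G v K ∪ {u} ∪ P.before (Fin.last n) ⊆ insert w (insert x Z) := by
    intro z hz
    by_cases hzx : z = x
    · exact Or.inr (Or.inl hzx)
    · exact Or.inr (Or.inr ⟨hz, hzx⟩)
  obtain ⟨n₁, q₁, harc₁⟩ : ∃ n p, InducedArc G Z w x n p := by
    apply exists_inducedArc (hwB x hxB).1
    have hsub : levelsBelow G v K ⊆ insert w (insert x Z) :=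
      fun z hz => hZsub (Or.inl (Or.inl hz))
    have huT : u ∈ insert w (insert x Z) := hZsub (Or.inl (Or.inr rfl))
    have hoT : P.origin ∈ insert w (insert x Z) := by
      by_cases hox : P.origin = x
      · exact Or.inr (Or.inl hox)
      · refine hZsub (Or.inr ?_)
        have hn : 0 < n := by
          rw [Nat.pos_iff_ne_zero]
          rintro rfl
          exact hox rfl
        exact ⟨0, Fin.lt_def.2 hn, Or.inl (P.x_mem 0)⟩
    exact (level_reachable hw (Or.inl rfl) hsub).symm.trans
      ((level_reachable hu huT hsub).trans
        ((within_reachable_of_adj huo huT hoT).trans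
          (P.before_reachable fun z hz => hZsub (Or.inr hz))))
  obtain ⟨n₂, q₂, harc₂⟩ : ∃ n p, InducedArc G F y w n p := by
    apply exists_inducedArc (hwB y hyB).1.symm
    have hsub : P.tail ⊆ insert y (insert w F) := by
      intro z hz
      by_cases hzy : z = y
      · exact Or.inl hzy
      · exact Or.inr (Or.inr ⟨hz, hzy⟩)
    exact (P.tail_reachable hh hsub).trans
      (within_reachable_of_adj hwh.symm (hsub (Or.inr hh)) (Or.inr (Or.inl rfl)))
  have hn₁ := harc₁.two_le (hwB x hxB).1 fun e => (hwB x hxB).2 e.symm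
  have hn₂ := harc₂.two_le (hwB y hyB).1.symm (hwB y hyB).2
  have hanti : Anticomplete G (insert x (B \ {x, y})) (insert w F) := by
    rintro s hs t ht
    have hs' : s ∈ B \ {y} := by
      rcases hs with rfl | hs
      · exact ⟨hxB, hxy⟩
      · exact ⟨hs.1, fun e => hs.2 (Or.inr e)⟩
    rcases ht with rfl | ht
    · exact ⟨(hwB s hs'.1).1.symm, (hwB s hs'.1).2⟩
    · exact P.block_anticomplete_tail s hs' t ht
  have hxtail : x ∉ P.tail := fun h => hxy (P.block_inter_tail hxB h)
  have hanti' : Anticomplete G (insert y (B \ {x, y} ∪ F)) Z := by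
    apply Anticomplete.symm
    rintro s ⟨hs, hsx⟩ t ht
    have ht' : t ∈ (B ∪ P.tail) \ {x} := by
      rcases ht with rfl | ht | ht
      · exact ⟨Or.inl hyB, hxy.symm⟩
      · exact ⟨Or.inl ht.1, fun e => ht.2 (Or.inl e)⟩
      · exact ⟨Or.inr ht.1, fun e => hxtail (e ▸ ht.1)⟩
    have htlev' : t ∈ level G v (K + 1) := ht'.1.elim (fun h => hBlev h) fun h => htlev h
    have htsup : t ∈ P.support :=
      ht'.1.elim (fun h => P.block_subset _ h) fun h => P.tail_subset h
    rcases hs with (hs | rfl) | hs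
    · exact levelsBelow_anticomplete (X := level G v (K + 1)) subset_rfl (by omega) s hs t htlev'
    · exact ⟨level_ne hu htlev' (by omega), hunot t htsup (P.ne_origin ht'.1 ht'.2)⟩
    · exact P.before_anticomplete s ⟨hs, hsx⟩ t ht'
  have no_hole : ∀ L p, InducedArc G (B \ {x, y}) x y L p → 2 ≤ L → ¬ Even (L + n₂ + n₁) := by
    intro L p hp hL hE
    obtain ⟨f⟩ := (hp.concat harc₂ (by omega) (by omega) hanti).hole harc₁.symm (by omega) hn₁
      hanti'
    exact (heven _ (by omega) hE).false f
  have f₀ := no_hole _ _ arc₀ hl₀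
  have f₁ := no_hole _ _ arc₁ hl₁
  obtain ⟨s, hs⟩ := hodd
  obtain ⟨r, hr⟩ := hev
  rw [Nat.not_even_iff_odd] at f₀ f₁
  obtain ⟨s', hs'⟩ := f₀
  obtain ⟨r', hr'⟩ := f₁
  omega

end Lift

/-- Let `G ∈ C_{3,5,2k≥6}` and `P` a rooted PCP of order `ℓ` in a level
`N_k` (`k ≥ 2`) with leftovers at least `δ`; let `A = N(G_ℓ) ∩ N_{k-1}` be the active
lift. Then `χ(A) ≥ δ/52`. -/
theorem active_lift_large_no_C5 (V : Type) [Fintype V] (G : SimpleGraph V)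
    (h3 : G.CliqueFree 3) (h5 : NoInducedCycle G 5)
    (heven : ∀ n : ℕ, 6 ≤ n → Even n → NoInducedCycle G n)
    (v : V) (k ℓ : ℕ) (hk : 2 ≤ k) (hℓ : 0 < ℓ)
    (P : PCP G ℓ) (hroot : P.IsRootedInLevel v k)
    (δ : ℝ) (hδ : δ ≤ (P.leftovers : ℝ))
    (A : Set V)
    (hA : A = neighborsOf G (P.block ⟨ℓ - 1, by omega⟩) ∩ level G v (k - 1)) :
    δ / 52 ≤ (chiSet G A : ℝ) := by
  classical
  obtain ⟨n, rfl⟩ : ∃ n, ℓ = n + 1 := ⟨ℓ - 1, by omega⟩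
  obtain ⟨K, rfl⟩ : ∃ K, k = K + 1 := ⟨k - 1, by omega⟩
  have hAK : A ⊆ level G v K := by
    rw [hA]
    exact fun x hx => hx.2
  -- every vertex of the last block has a neighbour in the active lift
  have hdom : ∀ h : P.lastBlock, ∃ a : A, G.Adj a h := by
    rintro ⟨h, hh⟩
    have hlev : h ∈ level G v (K + 1) := hroot.1 (Or.inl (Or.inr hh))
    obtain ⟨w, hw⟩ := hlev.1.exists_walk_length_eq_dist
    rw [hlev.2] at hw
    have e : G.Adj (w.getVert K) h := by
      have := w.adj_getVert_succ (i := K) (by omega)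
      rwa [← hw, w.getVert_length] at this
    have hK : w.getVert K ∈ level G v K := by
      refine ⟨(w.take K).reachable, ?_⟩
      have h1 := G.dist_le (w.take K)
      rw [Walk.take_length] at h1
      by_contra hne
      have hb : w.getVert K ∈ level G v (G.dist v (w.getVert K)) :=
        ⟨(w.take K).reachable, rfl⟩
      exact level_not_adj hb hlev (by omega) e
    obtain ⟨s, hs, hsw⟩ := P.exists_adj_block heven hroot hK hh e
    refine ⟨⟨_, ?_⟩, e⟩
    rw [hA]
    exact ⟨⟨s, hs, hsw⟩, hK⟩
  choose α hα using hdom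
  obtain ⟨C⟩ : (G.induce A).Colorable (chiSet G A) :=
    colorable_chromaticNumber_of_fintype (G.induce A)
  -- the vertices of the last block whose chosen neighbour in `A` has colour `i`
  let X : Fin (chiSet G A) → Set V := fun i => {h | ∃ hh : h ∈ P.lastBlock, C (α ⟨h, hh⟩) = i}
  have hXlev : ∀ i, X i ⊆ level G v (K + 1) := by
    rintro i h ⟨hh, -⟩
    exact hroot.1 (Or.inl (Or.inr hh))
  have hX : ∀ i, Nonempty ((G.induce (X i)).Coloring (Fin 2)) := by
    intro i
    refine bipartite_of_dominated (A := {a | ∃ ha : a ∈ A, C ⟨a, ha⟩ = i})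
      (U := levelsBelow G v K) h3 h5 heven ?_ ?_ ?_
      (levelsBelow_anticomplete (hXlev i) (by omega)) ?_
    · rintro a ⟨ha, hai⟩ b ⟨hb, hbi⟩ e
      exact C.valid (v := ⟨a, ha⟩) (w := ⟨b, hb⟩) e (hai.trans hbi.symm)
    · rintro a ⟨ha, -⟩ haX
      exact level_ne (hAK ha) (hXlev i haX) (by omega) rfl
    · rintro h ⟨hh, hi⟩
      exact ⟨_, ⟨(α ⟨h, hh⟩).2, hi⟩, hα ⟨h, hh⟩⟩
    · rintro a ⟨ha, -⟩ b ⟨hb, -⟩ hab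
      exact exists_arc_below (hAK ha) (hAK hb) hab
  have D := fun i => (hX i).some
  have hcol : (G.induce P.lastBlock).Colorable (chiSet G A * 2) := by
    have D' : (G.induce P.lastBlock).Coloring (Fin (chiSet G A) × Fin 2) :=
      Coloring.mk (fun h => (C (α h), D (C (α h)) ⟨h, h.2, rfl⟩)) <| by
        intro h h' e heq
        have h1 : C (α h) = C (α h') := congrArg Prod.fst heq
        have h2 := congrArg Prod.snd heq
        have key : ∀ i (hi : C (α h) = i) (hi' : C (α h') = i),
            D i ⟨h, h.2, hi⟩ ≠ D i ⟨h', h'.2, hi'⟩ := fun i hi hi' => (D i).valid e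
        apply key _ h1 rfl
        refine Eq.trans ?_ h2
        have transport : ∀ i j (hij : i = j) (hi : C (α h) = i) (hj : C (α h) = j),
            D i ⟨h, h.2, hi⟩ = D j ⟨h, h.2, hj⟩ := by
          rintro i _ rfl hi hj
          rfl
        exact transport _ _ h1.symm h1 rfl
    simpa using D'.colorable
  have hle : P.leftovers ≤ chiSet G A * 2 :=
    ENat.toNat_le_of_le_natCast hcol.chromaticNumber_le
  have hle' : (P.leftovers : ℝ) ≤ chiSet G A * 2 := by exact_mod_cast hle
  have h0 : (0 : ℝ) ≤ chiSet G A := Nat.cast_nonneg _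
  linarith
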